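/- Let 0 < q < 1, let C_1 := q^{1/6} f(-q) f(-q^10)/(f(-q^2) f(-q^5)) and C_2 := q^{1/3} f(-q^2) f(-q^20)/(f(-q^4) f(-q^10)), and set P := C_1·C_2 and Q := C_1/C_2. Then (P + 1/P)(Q^3 + 1/Q^3) + 2 = P^2 + 1/P^2. -/

import Mathlib

open Real

/-- Ramanujan's theta function `φ(q) = ∑_{n=-∞}^∞ q^(n^2)`. -/
noncomputable def phi (q : ℝ) : ℝ := ∑' n : ℤ, q ^ (n ^ 2)

/-- Ramanujan's theta function `ψ(q) = ∑_{n=0}^∞ q^(n(n+1)/2)`. -/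
noncomputable def psi (q : ℝ) : ℝ := ∑' n : ℕ, q ^ (n * (n + 1) / 2)

/-- `fneg q` is Ramanujan's `f(-q) = ∑_{n=-∞}^∞ (-1)^n q^(n(3n-1)/2)`. -/
noncomputable def fneg (q : ℝ) : ℝ := ∑' n : ℤ, (-1 : ℝ) ^ n * q ^ (n * (3 * n - 1) / 2)

open Filter Topology

/-- The triangular number `j (j - 1) / 2` attached to an integer `j`. -/
def triangle (j : ℤ) : ℤ := j * (j - 1) / 2

lemma two_mul_triangle (j : ℤ) : 2 * triangle j = j * (j - 1) :=
  Int.mul_ediv_cancel' (Int.even_mul_pred_self j).two_dvd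

lemma triangle_add_one (j : ℤ) : triangle (j + 1) = triangle j + j := by
  have h₁ := two_mul_triangle j
  have h₂ := two_mul_triangle (j + 1)
  linarith [show (j + 1) * (j + 1 - 1) = j * (j - 1) + 2 * j by ring]

lemma triangle_sub_one (j : ℤ) : triangle (j - 1) = triangle j - (j - 1) := by
  have h := triangle_add_one (j - 1)
  rw [sub_add_cancel] at h
  linarith

lemma triangle_neg (j : ℤ) : triangle (-j) = triangle j + j := by
  have h₁ := two_mul_triangle j
  have h₂ := two_mul_triangle (-j)
  linarith [show -j * (-j - 1) = j * (j - 1) + 2 * j by ring]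

/-- The infinite `q`-Pochhammer symbol `(a; q)_∞`. -/
noncomputable def qPoch (a q : ℝ) : ℝ := ∏' n : ℕ, (1 - a * q ^ n)

/-- The theta series `∑ q ^ (n (n - 1) / 2) z ^ n`. -/
noncomputable def thetaSum (q z : ℝ) : ℝ := ∑' n : ℤ, q ^ triangle n * z ^ n

section qPoch

variable {a q : ℝ}

lemma summable_norm_neg_mul_pow (a : ℝ) (hq : |q| < 1) :
    Summable fun n : ℕ ↦ ‖-(a * q ^ n)‖ := by
  simpa [abs_mul] using (summable_geometric_of_abs_lt_one (by simpa using hq)).mul_left |a|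

lemma multipliable_one_sub_mul_pow (a : ℝ) (hq : |q| < 1) :
    Multipliable fun n : ℕ ↦ 1 - a * q ^ n := by
  simpa only [sub_eq_add_neg] using
    multipliable_one_add_of_summable (summable_norm_neg_mul_pow a hq)

lemma tendsto_prod_qPoch (a : ℝ) (hq : |q| < 1) :
    Tendsto (fun n ↦ ∏ k ∈ Finset.range n, (1 - a * q ^ k)) atTop (𝓝 (qPoch a q)) :=
  (multipliable_one_sub_mul_pow a hq).hasProd.tendsto_prod_nat

lemma mul_pow_ne_one (ha : |a| < 1) (hq : |q| < 1) (n : ℕ) : a * q ^ n ≠ 1 := by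
  intro h
  have h₁ : |a| * |q| ^ n = 1 := by rw [← abs_pow, ← abs_mul, h, abs_one]
  have h₂ : |q| ^ n ≤ 1 := pow_le_one₀ (abs_nonneg _) hq.le
  nlinarith [abs_nonneg a]

lemma qPoch_ne_zero (ha : |a| < 1) (hq : |q| < 1) : qPoch a q ≠ 0 := by
  have := tprod_one_add_ne_zero_of_summable (f := fun n : ℕ ↦ -(a * q ^ n))
    (fun n ↦ by rw [← sub_eq_add_neg]; exact sub_ne_zero.2 (mul_pow_ne_one ha hq n).symm)
    (summable_norm_neg_mul_pow a hq)
  simpa only [qPoch, sub_eq_add_neg] using this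

/-- Splitting `(a; q)_∞` according to residues modulo `k`. -/
lemma qPoch_eq_prod (a : ℝ) (hq : |q| < 1) {k : ℕ} (hk : k ≠ 0) :
    qPoch a q = ∏ j ∈ Finset.range k, qPoch (a * q ^ j) (q ^ k) := by
  have hqk : |q ^ k| < 1 := by rw [abs_pow]; exact pow_lt_one₀ (abs_nonneg _) hq hk
  refine tendsto_nhds_unique ((tendsto_prod_qPoch a hq).comp
    (tendsto_id.nsmul_atTop (Nat.pos_of_ne_zero hk)))
    ((tendsto_finsetProd _ fun j _ ↦ tendsto_prod_qPoch (a * q ^ j) hqk).congr fun n ↦ ?_)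
  rw [Finset.prod_comm]
  simp only [Function.comp, id, smul_eq_mul]
  rw [mul_comm k n]
  induction n with
  | zero => simp
  | succ n ih =>
    rw [Finset.prod_range_succ, ih, add_mul, one_mul, Finset.prod_range_add]
    congr 1
    refine Finset.prod_congr rfl fun j _ ↦ ?_
    rw [← pow_mul, mul_assoc, ← pow_add]
    ring_nf

lemma qPoch_mul_qPoch_neg (a : ℝ) (hq : |q| < 1) :
    qPoch a q * qPoch (-a) q = qPoch (a ^ 2) (q ^ 2) := by
  rw [qPoch, qPoch, qPoch, ← (multipliable_one_sub_mul_pow a hq).tprod_mul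
    (multipliable_one_sub_mul_pow (-a) hq)]
  congr 1
  ext n
  ring

lemma qPoch_eq_one_sub_mul (a : ℝ) (hq : |q| < 1) :
    qPoch a q = (1 - a) * qPoch (a * q) q := by
  refine tendsto_nhds_unique ((tendsto_add_atTop_iff_nat 1).2 (tendsto_prod_qPoch a hq))
    (((tendsto_prod_qPoch (a * q) hq).const_mul (1 - a)).congr fun n ↦ ?_)
  rw [Finset.prod_range_succ']
  simp only [pow_zero, mul_one, pow_succ']
  rw [mul_comm]
  congr 1
  exact Finset.prod_congr rfl fun k _ ↦ by ring

end qPoch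

section JacobiTripleProduct

variable {q z : ℝ}

/-- The finite product `(q; q)_m`. -/
noncomputable def eulerFinite (q : ℝ) (m : ℕ) : ℝ := ∏ k ∈ Finset.range m, (1 - q * q ^ k)

lemma eulerFinite_ne_zero (hq : |q| < 1) (m : ℕ) : eulerFinite q m ≠ 0 :=
  Finset.prod_ne_zero_iff.2 fun k _ ↦ sub_ne_zero.2 (mul_pow_ne_one hq hq k).symm

/-- The reciprocal of `(q; q)_m`, extended by zero to negative `m`. -/
noncomputable def eulerInv (q : ℝ) (m : ℤ) : ℝ := if m < 0 then 0 else (eulerFinite q m.toNat)⁻¹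

lemma eulerInv_sub_one (hq : |q| < 1) (m : ℤ) :
    eulerInv q (m - 1) = (1 - q ^ m) * eulerInv q m := by
  rcases lt_trichotomy m 0 with h | rfl | h
  · simp [eulerInv, h, show m - 1 < 0 by omega]
  · simp [eulerInv]
  · obtain ⟨n, rfl⟩ : ∃ n : ℕ, m = n + 1 := ⟨(m - 1).toNat, by omega⟩
    have h₁ : ((n : ℤ) + 1).toNat = n + 1 := by omega
    have h₂ : ((n : ℤ) + 1 - 1).toNat = n := by omega
    have h₃ := eulerFinite_ne_zero hq n
    have h₄ : 1 - q * q ^ n ≠ 0 := sub_ne_zero.2 (mul_pow_ne_one hq hq n).symm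
    rw [eulerInv, eulerInv, if_neg (by omega), if_neg (by omega), h₁, h₂,
      show eulerFinite q (n + 1) = eulerFinite q n * (1 - q * q ^ n) from
        Finset.prod_range_succ _ _,
      show q ^ ((n : ℤ) + 1) = q * q ^ n by rw [← pow_succ']; exact_mod_cast zpow_natCast q (n + 1)]
    field_simp

/-- The central Gaussian binomial coefficient `[2n, n + j]_q`. -/
noncomputable def gaussCentral (q : ℝ) (n : ℕ) (j : ℤ) : ℝ :=
  eulerFinite q (2 * n) * eulerInv q (n + j) * eulerInv q (n - j)

lemma gaussCentral_succ (hq0 : q ≠ 0) (hq : |q| < 1) (n : ℕ) (j : ℤ) :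
    gaussCentral q (n + 1) j = (1 + q ^ (2 * n + 1)) * gaussCentral q n j +
      q ^ (n + 1 - j) * gaussCentral q n (j - 1) +
      q ^ (n + 1 + j) * gaussCentral q n (j + 1) := by
  have e₁ : eulerInv q (n + j) = (1 - q ^ (n + 1 + j)) * eulerInv q (n + 1 + j) := by
    rw [← eulerInv_sub_one hq]; ring_nf
  have e₂ : eulerInv q (n - j) = (1 - q ^ (n + 1 - j)) * eulerInv q (n + 1 - j) := by
    rw [← eulerInv_sub_one hq]; ring_nf
  have e₃ : eulerInv q (n + (j - 1)) = (1 - q ^ (n + j)) * eulerInv q (n + j) := by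
    rw [← eulerInv_sub_one hq]; ring_nf
  have e₄ : eulerInv q (n - (j + 1)) = (1 - q ^ (n - j)) * eulerInv q (n - j) := by
    rw [← eulerInv_sub_one hq]; ring_nf
  have e₅ : eulerFinite q (2 * (n + 1)) =
      eulerFinite q (2 * n) * (1 - q ^ (2 * n + 1)) * (1 - q ^ (2 * n + 2)) := by
    rw [show 2 * (n + 1) = 2 * n + 1 + 1 by ring, eulerFinite, Finset.prod_range_succ,
      Finset.prod_range_succ]
    simp only [eulerFinite, pow_succ]
    ring
  have hu : q ^ (n + 1 + j) = q * q ^ (n + j) := by rw [← zpow_one_add₀ hq0]; ring_nf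
  have hv : q ^ (n + 1 - j) = q * q ^ (n - j) := by rw [← zpow_one_add₀ hq0]; ring_nf
  have huv : q ^ (2 * n) = q ^ (n + j) * q ^ (n - j) := by
    rw [← zpow_add₀ hq0, ← zpow_natCast]; push_cast; ring_nf
  rw [gaussCentral, gaussCentral, gaussCentral, gaussCentral, e₅, e₃, e₄, e₁, e₂,
    show (n : ℤ) - (j - 1) = n + 1 - j by ring, show (n : ℤ) + (j + 1) = n + 1 + j by ring,
    pow_add q (2 * n) 2, pow_succ q (2 * n), huv, hu, hv]
  push_cast
  ring

/-- The finite form of the Jacobi triple product identity. -/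
lemma hasSum_gaussCentral (hq0 : q ≠ 0) (hq : |q| < 1) (hz : z ≠ 0) (n : ℕ) :
    HasSum (fun j : ℤ ↦ gaussCentral q n j * (q ^ triangle j * z ^ j))
      (∏ k ∈ Finset.range n, ((1 - -z * q ^ k) * (1 - -(q / z) * q ^ k))) := by
  induction n with
  | zero =>
    convert hasSum_ite_eq (0 : ℤ) (1 : ℝ) using 2 with j
    · split_ifs with h
      · subst h; simp [gaussCentral, eulerFinite, eulerInv, triangle]
      · rcases lt_or_gt_of_ne h with h | h
        · simp [gaussCentral, eulerInv, h]
        · simp [gaussCentral, eulerInv, h]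
    · simp
  | succ n ih =>
    have h₁ := (Equiv.subRight (1 : ℤ)).hasSum_iff.2 ih
    have h₂ := (Equiv.addRight (1 : ℤ)).hasSum_iff.2 ih
    have h := ((ih.mul_left (1 + q ^ (2 * n + 1))).add (h₁.mul_left (z * q ^ n))).add
      (h₂.mul_left (q ^ (n + 1) / z))
    rw [Finset.prod_range_succ]
    convert! h using 1
    · ext j
      simp only [Function.comp, Equiv.subRight_apply, Equiv.coe_addRight]
      rw [gaussCentral_succ hq0 hq, triangle_sub_one, triangle_add_one, zpow_sub_one₀ hz,
        zpow_add_one₀ hz, zpow_add₀ hq0 (triangle j), zpow_sub₀ hq0 (triangle j),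
        zpow_sub_one₀ hq0, zpow_add₀ hq0 _ j, zpow_sub₀ hq0 _ j, zpow_add_one₀ hq0, zpow_natCast,
        pow_succ q n]
      field_simp
    · generalize ∏ k ∈ Finset.range n, ((1 - -z * q ^ k) * (1 - -(q / z) * q ^ k)) = F
      field_simp
      ring

lemma summable_nat_zpow_triangle_mul_pow (hq0 : q ≠ 0) (hq : |q| < 1) (hz : z ≠ 0) :
    Summable fun n : ℕ ↦ q ^ triangle n * z ^ n := by
  refine summable_of_ratio_test_tendsto_lt_one (l := 0) one_pos
    (Eventually.of_forall fun n ↦ mul_ne_zero (zpow_ne_zero _ hq0) (pow_ne_zero _ hz)) ?_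
  have h : Tendsto (fun n : ℕ ↦ |q| ^ n * |z|) atTop (𝓝 0) := by
    simpa using (tendsto_pow_atTop_nhds_zero_of_lt_one (abs_nonneg q) hq).mul_const |z|
  refine h.congr fun n ↦ ?_
  have h₁ : q ^ triangle n * z ^ n ≠ 0 := mul_ne_zero (zpow_ne_zero _ hq0) (pow_ne_zero _ hz)
  rw [← norm_div, Nat.cast_succ, triangle_add_one, zpow_add₀ hq0, zpow_natCast, pow_succ z,
    show q ^ triangle n * q ^ n * (z ^ n * z) / (q ^ triangle n * z ^ n) = q ^ n * z by
      field_simp]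
  simp

lemma summable_thetaSum (hq0 : q ≠ 0) (hq : |q| < 1) (hz : z ≠ 0) :
    Summable fun n : ℤ ↦ q ^ triangle n * z ^ n := by
  refine Summable.of_nat_of_neg (by simpa using summable_nat_zpow_triangle_mul_pow hq0 hq hz) ?_
  refine (summable_nat_zpow_triangle_mul_pow (z := q / z) hq0 hq (div_ne_zero hq0 hz)).congr
    fun n ↦ ?_
  rw [triangle_neg, zpow_add₀ hq0, zpow_neg, zpow_natCast, zpow_natCast, div_pow]
  ring

/-- The Jacobi triple product identity. -/
theorem thetaSum_eq_qPoch (hq0 : q ≠ 0) (hq : |q| < 1) (hz : z ≠ 0) :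
    thetaSum q z = qPoch q q * qPoch (-z) q * qPoch (-(q / z)) q := by
  have hE := tendsto_prod_qPoch q hq
  have hE0 := qPoch_ne_zero hq hq
  have hinv : Tendsto (eulerInv q) atTop (𝓝 (qPoch q q)⁻¹) := by
    refine ((hE.inv₀ hE0).comp (tendsto_atTop_atTop.2 fun b ↦
      ⟨b, fun m hm ↦ by omega⟩ : Tendsto Int.toNat atTop atTop)).congr' ?_
    filter_upwards [eventually_ge_atTop 0] with m hm
    simp [eulerInv, hm.not_gt, eulerFinite]
  obtain ⟨M, hM⟩ := hE.norm.bddAbove_range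
  obtain ⟨N, hN⟩ := (hE.inv₀ hE0).norm.bddAbove_range
  have hM' (m : ℕ) : ‖eulerFinite q m‖ ≤ M := hM ⟨m, rfl⟩
  have hN' (m : ℤ) : ‖eulerInv q m‖ ≤ N := by
    rw [eulerInv]
    split_ifs
    · simpa using (norm_nonneg _).trans (hN ⟨0, rfl⟩)
    · exact hN ⟨m.toNat, rfl⟩
  have hM0 : 0 ≤ M := (norm_nonneg _).trans (hM' 0)
  have hN0 : 0 ≤ N := (norm_nonneg _).trans (hN' 0)
  have hcast : Tendsto (fun n : ℕ ↦ (n : ℤ)) atTop atTop := tendsto_natCast_atTop_atTop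
  have hcoeff (j : ℤ) : Tendsto (fun n ↦ gaussCentral q n j) atTop (𝓝 (qPoch q q)⁻¹) := by
    have h := ((hE.comp (tendsto_id.nsmul_atTop two_pos)).mul
      (hinv.comp (tendsto_atTop_add_const_right _ j hcast))).mul
      (hinv.comp (tendsto_atTop_add_const_right _ (-j) hcast))
    rw [mul_inv_cancel₀ hE0, one_mul] at h
    exact h
  have hlim : Tendsto (fun n ↦ ∑' j : ℤ, gaussCentral q n j * (q ^ triangle j * z ^ j)) atTop
      (𝓝 (∑' j : ℤ, (qPoch q q)⁻¹ * (q ^ triangle j * z ^ j))) := by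
    refine tendsto_tsum_of_dominated_convergence
      (bound := fun j ↦ M * N * N * ‖q ^ triangle j * z ^ j‖)
      ((summable_thetaSum hq0 hq hz).norm.mul_left _)
      (fun j ↦ (hcoeff j).mul_const _) (Eventually.of_forall fun n j ↦ ?_)
    rw [norm_mul, gaussCentral, norm_mul, norm_mul]
    gcongr
    exacts [hM' _, hN' _, hN' _]
  have hprod := (tendsto_prod_qPoch (-z) hq).mul (tendsto_prod_qPoch (-(q / z)) hq)
  have huniq := tendsto_nhds_unique hlim (hprod.congr fun n ↦ by
    rw [(hasSum_gaussCentral hq0 hq hz n).tsum_eq, Finset.prod_mul_distrib])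
  rw [tsum_mul_left, inv_mul_eq_iff_eq_mul₀ hE0] at huniq
  rw [thetaSum, huniq, mul_assoc]

end JacobiTripleProduct

section QuinticLattice

/-- Decomposition of `ℤ × ℤ` into the five translates of an index-five sublattice. -/
def quinticEquiv (c : ℤ) : Fin 5 × (ℤ × ℤ) ≃ ℤ × ℤ where
  toFun p := (2 * p.2.1 - p.2.2 + (p.1 : ℕ), p.2.1 + 2 * p.2.2 + c)
  invFun p :=
    (⟨((p.1 - 2 * (p.2 - c)) % 5).toNat, by omega⟩,
      (p.2 - c + 2 * ((p.1 - 2 * (p.2 - c)) / 5), -((p.1 - 2 * (p.2 - c)) / 5)))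
  left_inv := by
    rintro ⟨⟨j, hj⟩, s, t⟩
    simp only [Prod.mk.injEq, Fin.mk.injEq]
    omega
  right_inv := by
    rintro ⟨m, n⟩
    simp only [Prod.mk.injEq]
    omega

lemma tsum_sq_eq_sum_quintic {g : ℤ → ℝ} (hg : Summable g) (c : ℤ) :
    (∑' n, g n) ^ 2 =
      ∑ j ∈ Finset.range 5, ∑' p : ℤ × ℤ, g (2 * p.1 - p.2 + j) * g (p.1 + 2 * p.2 + c) := by
  have hs : Summable fun p : ℤ × ℤ ↦ g p.1 * g p.2 :=
    summable_mul_of_summable_norm hg.norm hg.norm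
  rw [sq, hg.tsum_mul_tsum hg hs, ← (quinticEquiv c).tsum_eq, Finset.sum_range,
    ← tsum_fintype (L := .unconditional _)]
  exact ((quinticEquiv c).summable_iff.2 hs).tsum_prod

lemma tsum_prod_eq_of_reindex {f : ℤ × ℤ → ℝ} {h k : ℤ → ℝ} {C : ℝ} (e₁ e₂ : ℤ ≃ ℤ)
    (hh : Summable h) (hk : Summable k) (hf : ∀ s t, f (e₁ s, e₂ t) = C * (h s * k t)) :
    ∑' p, f p = C * ((∑' s, h s) * ∑' t, k t) := by
  rw [hh.tsum_mul_tsum hk (summable_mul_of_summable_norm hh.norm hk.norm), ← tsum_mul_left,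
    ← (e₁.prodCongr e₂).tsum_eq]
  exact tsum_congr fun p ↦ hf p.1 p.2

variable {q : ℝ}

lemma abs_pow_lt_one_of_ne_zero (hq : |q| < 1) {k : ℕ} (hk : k ≠ 0) : |q ^ k| < 1 := by
  rw [abs_pow]
  exact pow_lt_one₀ (abs_nonneg _) hq hk

lemma phi_eq_thetaSum (hq0 : q ≠ 0) : phi q = thetaSum (q ^ 2) q := by
  refine tsum_congr fun n ↦ ?_
  rw [← zpow_natCast, ← zpow_mul, ← zpow_add₀ hq0, Nat.cast_ofNat, two_mul_triangle]
  congr 1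
  ring

lemma summable_zpow_sq (hq0 : q ≠ 0) (hq : |q| < 1) : Summable fun n : ℤ ↦ q ^ (n ^ 2) := by
  refine (summable_thetaSum (pow_ne_zero 2 hq0) (abs_pow_lt_one_of_ne_zero hq two_ne_zero)
    hq0).congr fun n ↦ ?_
  rw [← zpow_natCast, ← zpow_mul, ← zpow_add₀ hq0, Nat.cast_ofNat, two_mul_triangle]
  congr 1
  ring

lemma phi_sq_sub_phi_pow_five_sq (hq0 : q ≠ 0) (hq : |q| < 1) :
    phi q ^ 2 - phi (q ^ 5) ^ 2 = 4 * q * (thetaSum (q ^ 10) q * thetaSum (q ^ 10) (q ^ 3)) := by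
  have hs (d : ℕ) : Summable fun n : ℤ ↦ (q ^ 10) ^ triangle n * (q ^ d) ^ n :=
    summable_thetaSum (pow_ne_zero _ hq0) (abs_pow_lt_one_of_ne_zero hq (by norm_num))
      (pow_ne_zero _ hq0)
  have key (j : ℤ) (d₁ d₂ m : ℕ) (e₁ e₂ : ℤ ≃ ℤ)
      (he : ∀ s t, (2 * e₁ s - e₂ t + j) ^ 2 + (e₁ s + 2 * e₂ t + 0) ^ 2 =
        m + (5 * (s * (s - 1)) + d₁ * s + (5 * (t * (t - 1)) + d₂ * t))) :
      ∑' p : ℤ × ℤ, q ^ ((2 * p.1 - p.2 + j) ^ 2) * q ^ ((p.1 + 2 * p.2 + 0) ^ 2) =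
        q ^ m * (thetaSum (q ^ 10) (q ^ d₁) * thetaSum (q ^ 10) (q ^ d₂)) := by
    refine tsum_prod_eq_of_reindex e₁ e₂ (hs d₁) (hs d₂) fun s t ↦ ?_
    simp only [← zpow_natCast, ← zpow_mul, ← zpow_add₀ hq0]
    rw [he]
    congr 1
    push_cast
    linear_combination -5 * two_mul_triangle s - 5 * two_mul_triangle t
  have hphi : phi (q ^ 5) = thetaSum (q ^ 10) (q ^ 5) := by
    rw [phi_eq_thetaSum (pow_ne_zero _ hq0), ← pow_mul]
  rw [phi, tsum_sq_eq_sum_quintic (summable_zpow_sq hq0 hq) 0, hphi]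
  have h₀ := key 0 5 5 0 (Equiv.refl ℤ) (Equiv.refl ℤ) (fun s t ↦ by simp; ring)
  have h₁ := key 1 1 3 1 (Equiv.neg ℤ) (Equiv.refl ℤ) (fun s t ↦ by simp; ring)
  have h₂ := key 2 3 1 1 (Equiv.subRight 1) (Equiv.refl ℤ) (fun s t ↦ by simp; ring)
  have h₃ := key 3 3 1 1 (Equiv.subLeft (-1)) (Equiv.subLeft 1) (fun s t ↦ by simp; ring)
  have h₄ := key 4 1 3 1 (Equiv.subRight 2) (Equiv.subLeft 1) (fun s t ↦ by simp; ring)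
  simp only [pow_one, pow_zero] at h₀ h₁ h₂ h₃ h₄
  simp only [Finset.sum_range_succ, Finset.sum_range_zero, Nat.cast_zero, Nat.cast_one,
    Nat.cast_ofNat]
  rw [h₀, h₁, h₂, h₃, h₄]
  ring

lemma thetaSum_one_sq_sub (hq0 : q ≠ 0) (hq : |q| < 1) :
    thetaSum q 1 ^ 2 - q * thetaSum (q ^ 5) 1 ^ 2 =
      4 * (thetaSum (q ^ 5) q * thetaSum (q ^ 5) (q ^ 2)) := by
  have hs (d : ℕ) : Summable fun n : ℤ ↦ (q ^ 5) ^ triangle n * (q ^ d) ^ n :=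
    summable_thetaSum (pow_ne_zero _ hq0) (abs_pow_lt_one_of_ne_zero hq (by norm_num))
      (pow_ne_zero _ hq0)
  have hs₁ : Summable fun n : ℤ ↦ q ^ triangle n := by
    simpa using summable_thetaSum hq0 hq one_ne_zero
  have key (j : ℤ) (d₁ d₂ m : ℕ) (e₁ e₂ : ℤ ≃ ℤ)
      (he : ∀ s t, (2 * e₁ s - e₂ t + j) * (2 * e₁ s - e₂ t + j - 1) +
          (e₁ s + 2 * e₂ t + -1) * (e₁ s + 2 * e₂ t + -1 - 1) =
        2 * m + (5 * (s * (s - 1)) + 2 * d₁ * s + (5 * (t * (t - 1)) + 2 * d₂ * t))) :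
      ∑' p : ℤ × ℤ, q ^ triangle (2 * p.1 - p.2 + j) * q ^ triangle (p.1 + 2 * p.2 + -1) =
        q ^ m * (thetaSum (q ^ 5) (q ^ d₁) * thetaSum (q ^ 5) (q ^ d₂)) := by
    refine tsum_prod_eq_of_reindex e₁ e₂ (hs d₁) (hs d₂) fun s t ↦ ?_
    simp only [← zpow_natCast, ← zpow_mul, ← zpow_add₀ hq0]
    congr 1
    refine mul_left_cancel₀ (two_ne_zero (α := ℤ)) ?_
    push_cast
    linear_combination he s t - 5 * two_mul_triangle s - 5 * two_mul_triangle t +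
      two_mul_triangle (2 * e₁ s - e₂ t + j) + two_mul_triangle (e₁ s + 2 * e₂ t + -1)
  have hone : thetaSum q 1 = ∑' n : ℤ, q ^ triangle n := by simp [thetaSum]
  rw [hone, tsum_sq_eq_sum_quintic hs₁ (-1)]
  have h₀ := key 0 0 0 1 (Equiv.refl ℤ) (Equiv.refl ℤ) (fun s t ↦ by simp; ring)
  have h₁ := key 1 2 1 0 (Equiv.refl ℤ) (Equiv.subLeft 1) (fun s t ↦ by simp; ring)
  have h₂ := key 2 1 2 0 (Equiv.neg ℤ) (Equiv.subLeft 1) (fun s t ↦ by simp; ring)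
  have h₃ := key 3 1 2 0 (Equiv.subRight 1) (Equiv.addRight 1) (fun s t ↦ by simp; ring)
  have h₄ := key 4 2 1 0 (Equiv.subLeft (-1)) (Equiv.addRight 1) (fun s t ↦ by simp; ring)
  simp only [pow_one, pow_zero] at h₀ h₁ h₂ h₃ h₄
  simp only [Finset.sum_range_succ, Finset.sum_range_zero, Nat.cast_zero, Nat.cast_one,
    Nat.cast_ofNat]
  rw [h₀, h₁, h₂, h₃, h₄]
  ring

end QuinticLattice

section EulerQuotients

variable {q : ℝ}

lemma qPoch_self_eq (hq : |q| < 1) : qPoch q q = qPoch q (q ^ 2) * qPoch (q ^ 2) (q ^ 2) := by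
  rw [qPoch_eq_prod q hq two_ne_zero]
  simp [Finset.prod_range_succ, sq]

/-- Euler's identity: partitions into odd parts against partitions into distinct parts. -/
lemma qPoch_odd_mul_qPoch_neg (hq : |q| < 1) : qPoch q (q ^ 2) * qPoch (-q) q = 1 := by
  have hq2 := abs_pow_lt_one_of_ne_zero hq two_ne_zero
  refine mul_right_cancel₀ (qPoch_ne_zero hq2 hq2) ?_
  linear_combination qPoch_mul_qPoch_neg q hq - qPoch (-q) q * qPoch_self_eq hq

lemma phi_eq_qPoch (hq0 : q ≠ 0) (hq : |q| < 1) :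
    phi q = qPoch (q ^ 2) (q ^ 2) * qPoch (-q) (q ^ 2) ^ 2 := by
  rw [phi_eq_thetaSum hq0, thetaSum_eq_qPoch (pow_ne_zero _ hq0)
    (abs_pow_lt_one_of_ne_zero hq two_ne_zero) hq0, show q ^ 2 / q = q by field_simp]
  ring

lemma thetaSum_one_eq_qPoch (hq0 : q ≠ 0) (hq : |q| < 1) :
    thetaSum q 1 = 2 * (qPoch q q * qPoch (-q) q ^ 2) := by
  rw [thetaSum_eq_qPoch hq0 hq one_ne_zero, qPoch_eq_one_sub_mul (-1) hq, div_one, neg_one_mul]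
  ring

lemma phi_neg_mul (hq0 : q ≠ 0) (hq : |q| < 1) :
    phi (-q) * qPoch (q ^ 2) (q ^ 2) = qPoch q q ^ 2 := by
  rw [phi_eq_qPoch (neg_ne_zero.2 hq0) (by rwa [abs_neg]), neg_neg, neg_sq, qPoch_self_eq hq]
  ring

lemma phi_mul (hq0 : q ≠ 0) (hq : |q| < 1) :
    phi q * (qPoch q q ^ 2 * qPoch (q ^ 4) (q ^ 4) ^ 2) = qPoch (q ^ 2) (q ^ 2) ^ 5 := by
  have hq2 := abs_pow_lt_one_of_ne_zero hq two_ne_zero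
  have h₁ := qPoch_mul_qPoch_neg q hq2
  have h₂ := qPoch_self_eq hq2
  rw [← pow_mul] at h₁ h₂
  norm_num at h₁ h₂
  rw [phi_eq_qPoch hq0 hq, qPoch_self_eq hq, h₂, ← h₁]
  ring

lemma thetaSum_one_mul (hq0 : q ≠ 0) (hq : |q| < 1) :
    thetaSum q 1 * qPoch q q = 2 * qPoch (q ^ 2) (q ^ 2) ^ 2 := by
  rw [thetaSum_one_eq_qPoch hq0 hq, ← qPoch_mul_qPoch_neg q hq]
  ring

lemma thetaSum_one_sq (hq0 : q ≠ 0) (hq : |q| < 1) :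
    thetaSum q 1 ^ 2 = 2 * (phi q * thetaSum (q ^ 2) 1) := by
  have hq2 := abs_pow_lt_one_of_ne_zero hq two_ne_zero
  have hq4 := abs_pow_lt_one_of_ne_zero hq four_ne_zero
  have h₁ := phi_mul hq0 hq
  have h₂ := thetaSum_one_mul hq0 hq
  have h₃ := thetaSum_one_mul (pow_ne_zero 2 hq0) hq2
  rw [← pow_mul] at h₃
  norm_num at h₃
  have e₁ := qPoch_ne_zero hq hq
  have e₂ := qPoch_ne_zero hq2 hq2
  have e₄ := qPoch_ne_zero hq4 hq4
  rw [eq_div_of_mul_eq (by positivity) h₁, eq_div_of_mul_eq e₁ h₂, eq_div_of_mul_eq e₂ h₃]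
  field_simp

lemma fneg_eq_qPoch (hq0 : q ≠ 0) (hq : |q| < 1) : fneg q = qPoch q q := by
  have hq3 := abs_pow_lt_one_of_ne_zero hq three_ne_zero
  have h : fneg q = thetaSum (q ^ 3) (-q) := by
    refine tsum_congr fun n ↦ ?_
    have hn : n * (3 * n - 1) / 2 = 3 * triangle n + n := by
      have := two_mul_triangle n
      rw [show n * (3 * n - 1) = 2 * (3 * triangle n + n) by linear_combination -3 * this]
      exact Int.mul_ediv_cancel_left _ two_ne_zero
    rw [hn, zpow_add₀ hq0, zpow_mul, neg_eq_neg_one_mul q, mul_zpow]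
    norm_cast
    ring
  rw [h, thetaSum_eq_qPoch (pow_ne_zero _ hq0) hq3 (neg_ne_zero.2 hq0),
    qPoch_eq_prod q hq three_ne_zero, neg_neg,
    show -(q ^ 3 / -q) = q ^ 2 by field_simp]
  simp only [Finset.prod_range_succ, Finset.prod_range_zero]
  ring_nf

/-- Ramanujan's degree-five relation between `phi (-q)` and `psi q`, written with
`thetaSum q 1 = 2 * psi q`. -/
lemma phi_neg_thetaSum_degree_five (hq0 : q ≠ 0) (hq : |q| < 1) :
    (phi (-q ^ 5) ^ 2 - phi (-q) ^ 2) * (thetaSum q 1 ^ 2 - q * thetaSum (q ^ 5) 1 ^ 2) =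
      4 * q * (phi (-q ^ 5) ^ 2 * thetaSum (q ^ 5) 1 ^ 2) := by
  have hq5 := abs_pow_lt_one_of_ne_zero hq (k := 5) (by norm_num)
  have hq10 := abs_pow_lt_one_of_ne_zero hq (k := 10) (by norm_num)
  have hodd : qPoch q (q ^ 2) = qPoch q (q ^ 10) * qPoch (q ^ 3) (q ^ 10) *
      qPoch (q ^ 5) (q ^ 10) * qPoch (q ^ 7) (q ^ 10) * qPoch (q ^ 9) (q ^ 10) := by
    rw [qPoch_eq_prod q (abs_pow_lt_one_of_ne_zero hq two_ne_zero) (k := 5) (by norm_num)]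
    simp only [Finset.prod_range_succ, Finset.prod_range_zero]
    ring_nf
  have hdist : qPoch (-q) q = qPoch (-q) (q ^ 5) * qPoch (-q ^ 2) (q ^ 5) *
      qPoch (-q ^ 3) (q ^ 5) * qPoch (-q ^ 4) (q ^ 5) * qPoch (-q ^ 5) (q ^ 5) := by
    rw [qPoch_eq_prod (-q) hq (k := 5) (by norm_num)]
    simp only [Finset.prod_range_succ, Finset.prod_range_zero]
    ring_nf
  have euler₁ := qPoch_odd_mul_qPoch_neg hq
  have euler₅ := qPoch_odd_mul_qPoch_neg hq5
  rw [← pow_mul] at euler₅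
  have hL := phi_sq_sub_phi_pow_five_sq (neg_ne_zero.2 hq0) (by rwa [abs_neg])
  have e5 : (-q) ^ 5 = -q ^ 5 := by ring
  have e10 : (-q) ^ 10 = q ^ 10 := by ring
  have e3 : (-q) ^ 3 = -q ^ 3 := by ring
  rw [e5, e10, e3, thetaSum_eq_qPoch (pow_ne_zero _ hq0) hq10 (neg_ne_zero.2 hq0),
    thetaSum_eq_qPoch (pow_ne_zero _ hq0) hq10 (neg_ne_zero.2 (pow_ne_zero _ hq0)),
    show -(q ^ 10 / -q) = q ^ 9 by field_simp, show -(q ^ 10 / -q ^ 3) = q ^ 7 by field_simp,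
    neg_neg, neg_neg] at hL
  have hM := thetaSum_one_sq_sub hq0 hq
  rw [thetaSum_eq_qPoch (pow_ne_zero _ hq0) hq5 hq0,
    thetaSum_eq_qPoch (pow_ne_zero _ hq0) hq5 (pow_ne_zero _ hq0),
    show q ^ 5 / q = q ^ 4 by field_simp, show q ^ 5 / q ^ 2 = q ^ 3 by field_simp] at hM
  have hφ := phi_eq_qPoch (neg_ne_zero.2 (pow_ne_zero 5 hq0)) (by rwa [abs_neg])
  rw [neg_neg, neg_sq, ← pow_mul] at hφ
  norm_num at hφ euler₅
  have hψ := thetaSum_one_eq_qPoch (pow_ne_zero 5 hq0) hq5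
  have hprod : phi (-q ^ 5) * thetaSum (q ^ 5) 1 = 2 * (qPoch (q ^ 5) (q ^ 5) *
      qPoch (q ^ 10) (q ^ 10)) := by
    rw [hφ, hψ]
    linear_combination 2 * qPoch (q ^ 5) (q ^ 5) * qPoch (q ^ 10) (q ^ 10) *
      (qPoch (q ^ 5) (q ^ 10) * qPoch (-q ^ 5) (q ^ 5) + 1) * euler₅
  rw [hodd, hdist] at euler₁
  rw [← neg_sub (phi (-q) ^ 2), hL, hM, ← mul_pow, hprod]
  set u := qPoch q (q ^ 10) * qPoch (q ^ 9) (q ^ 10) * qPoch (q ^ 3) (q ^ 10) *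
    qPoch (q ^ 7) (q ^ 10) * (qPoch (-q) (q ^ 5) * qPoch (-q ^ 4) (q ^ 5) *
    qPoch (-q ^ 2) (q ^ 5) * qPoch (-q ^ 3) (q ^ 5)) with hu
  have hu1 : u = 1 := by linear_combination euler₁ - u * euler₅
  linear_combination 16 * q * (qPoch (q ^ 5) (q ^ 5) * qPoch (q ^ 10) (q ^ 10)) ^ 2 * hu1

end EulerQuotients

/-- The homogeneous cubic satisfied by three quantities obeying two degree-five relations. -/
lemma cubic_of_degree_five_relations {x z w : ℝ} (hxz : x + z ≠ 0)
    (h₁ : (1 - x ^ 2) * (z * w - 1) = 4) (h₂ : (z ^ 2 - 1) * (1 + x * w) = 4) :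
    (x + w) * (x * w + z ^ 2) = z * (x - w) ^ 2 := by
  have e₁ : x * z * w = w + x - z :=
    mul_left_cancel₀ hxz (by linear_combination h₂ - h₁)
  have e₂ : x * z + z * w - x * w = 5 := by linear_combination h₁ + x * e₁
  linear_combination 5 * e₁ - (w + x - z) * e₂

/-- The homogeneous cubic, rewritten for `P = c₁ c₂` and `Q = c₁ / c₂`. -/
lemma relation_of_cubic {x z w c₁ c₂ : ℝ} (hz : z ≠ 0) (h₁ : c₁ ≠ 0) (h₂ : c₂ ≠ 0)
    (hx : x = z * (c₁ ^ 2 / c₂) ^ 2) (hw : w = z * (c₁ / c₂ ^ 2) ^ 2)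
    (h : (x + w) * (x * w + z ^ 2) = z * (x - w) ^ 2) :
    (c₁ * c₂ + 1 / (c₁ * c₂)) * ((c₁ / c₂) ^ 3 + 1 / (c₁ / c₂) ^ 3) + 2 =
      (c₁ * c₂) ^ 2 + 1 / (c₁ * c₂) ^ 2 := by
  subst hx hw
  field_simp at h ⊢
  linear_combination h

theorem stmt_8 (q C₁ C₂ P Q : ℝ) (hq0 : 0 < q) (hq1 : q < 1)
    (hC1 : C₁ = q ^ ((1 : ℝ) / 6) * fneg q * fneg (q ^ 10) /
      (fneg (q ^ 2) * fneg (q ^ 5)))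
    (hC2 : C₂ = q ^ ((1 : ℝ) / 3) * fneg (q ^ 2) * fneg (q ^ 20) /
      (fneg (q ^ 4) * fneg (q ^ 10)))
    (hP : P = C₁ * C₂) (hQ : Q = C₁ / C₂) :
    (P + 1 / P) * (Q ^ 3 + 1 / Q ^ 3) + 2 = P ^ 2 + 1 / P ^ 2 := by
  have hne : q ≠ 0 := hq0.ne'
  have hq : |q| < 1 := by rwa [abs_of_pos hq0]
  have hqk {k : ℕ} (hk : k ≠ 0) : |q ^ k| < 1 := abs_pow_lt_one_of_ne_zero hq hk
  have hE {k : ℕ} (hk : k ≠ 0) : fneg (q ^ k) = qPoch (q ^ k) (q ^ k) :=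
    fneg_eq_qPoch (pow_ne_zero _ hne) (hqk hk)
  have hE0 {k : ℕ} (hk : k ≠ 0) : fneg (q ^ k) ≠ 0 := by
    rw [hE hk]; exact qPoch_ne_zero (hqk hk) (hqk hk)
  have E1 := hE0 one_ne_zero
  rw [pow_one] at E1
  have E2 := hE0 two_ne_zero
  have E4 := hE0 four_ne_zero
  have E5 := hE0 (k := 5) (by norm_num)
  have E10 := hE0 (k := 10) (by norm_num)
  have E20 := hE0 (k := 20) (by norm_num)
  have hB := phi_neg_mul hne hq
  have hA := phi_mul hne hq
  have hD := thetaSum_one_mul (pow_ne_zero 2 hne) (hqk two_ne_zero)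
  have hb := phi_neg_mul (pow_ne_zero 5 hne) (hqk (k := 5) (by norm_num))
  have ha := phi_mul (pow_ne_zero 5 hne) (hqk (k := 5) (by norm_num))
  have hd := thetaSum_one_mul (pow_ne_zero 10 hne) (hqk (k := 10) (by norm_num))
  simp only [← pow_mul] at hD hb ha hd
  norm_num at hD hb ha hd
  rw [← hE two_ne_zero, ← fneg_eq_qPoch hne hq] at hB
  rw [← hE two_ne_zero, ← hE four_ne_zero, ← fneg_eq_qPoch hne hq] at hA
  rw [← hE two_ne_zero, ← hE four_ne_zero] at hD
  rw [← hE (by norm_num), ← hE (by norm_num)] at hb hd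
  rw [← hE (by norm_num), ← hE (by norm_num), ← hE (by norm_num)] at ha
  have R₁ := phi_neg_thetaSum_degree_five hne hq
  have R₂ := phi_neg_thetaSum_degree_five (neg_ne_zero.2 hne) (by rwa [abs_neg])
  rw [show (-q) ^ 5 = -q ^ 5 by ring, neg_neg, neg_neg] at R₂
  have S₁ := thetaSum_one_sq hne hq
  have S₂ := thetaSum_one_sq (neg_ne_zero.2 hne) (by rwa [abs_neg])
  have S₅ := thetaSum_one_sq (pow_ne_zero 5 hne) (hqk (by norm_num))
  have S₆ := thetaSum_one_sq (neg_ne_zero.2 (pow_ne_zero 5 hne))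
    (by rw [abs_neg]; exact hqk (by norm_num))
  simp only [neg_sq, ← pow_mul] at S₁ S₂ S₅ S₆
  norm_num at S₅ S₆
  rw [S₁, S₅] at R₁
  rw [S₂, S₆] at R₂
  have A0 : phi q ≠ 0 := left_ne_zero_of_mul (hA ▸ pow_ne_zero 5 E2)
  have a0 : phi (q ^ 5) ≠ 0 := left_ne_zero_of_mul (ha ▸ pow_ne_zero 5 E10)
  have b0 : phi (-q ^ 5) ≠ 0 := left_ne_zero_of_mul (hb ▸ pow_ne_zero 2 E5)
  have d0 : thetaSum (q ^ 10) 1 ≠ 0 :=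
    left_ne_zero_of_mul (hd ▸ mul_ne_zero two_ne_zero (pow_ne_zero 2 E20))
  obtain ⟨r, hr0, hr⟩ : ∃ r : ℝ, r ≠ 0 ∧ q ^ ((1 : ℝ) / 6) = r ∧ q ^ ((1 : ℝ) / 3) = r ^ 2 ∧
      q = r ^ 6 := by
    refine ⟨_, (rpow_pos_of_pos hq0 _).ne', rfl, ?_, ?_⟩ <;>
    · rw [← rpow_natCast, ← rpow_mul hq0.le]
      norm_num
  obtain ⟨hr₁, hr₂, hr₆⟩ := hr
  have hC₁ : C₁ ≠ 0 := by rw [hC1, hr₁]; positivity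
  have hC₂ : C₂ ≠ 0 := by rw [hC2, hr₂]; positivity
  have hx : phi (-q) / phi (-q ^ 5) = phi q / phi (q ^ 5) * (C₁ ^ 2 / C₂) ^ 2 := by
    rw [hC1, hC2, hr₁, hr₂, eq_div_of_mul_eq (by positivity) hA, eq_div_of_mul_eq E2 hB,
      eq_div_of_mul_eq (by positivity) ha, eq_div_of_mul_eq E10 hb]
    field_simp
  have hw : thetaSum (q ^ 2) 1 / (q * thetaSum (q ^ 10) 1) =
      phi q / phi (q ^ 5) * (C₁ / C₂ ^ 2) ^ 2 := by
    rw [hC1, hC2, hr₁, hr₂, eq_div_of_mul_eq (by positivity) hA, eq_div_of_mul_eq E2 hD,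
      eq_div_of_mul_eq (by positivity) ha, eq_div_of_mul_eq E10 hd]
    field_simp
    exact hr₆.symm
  have hz : phi q / phi (q ^ 5) ≠ 0 := div_ne_zero A0 a0
  subst hP hQ
  refine relation_of_cubic hz hC₁ hC₂ hx hw (cubic_of_degree_five_relations ?_ ?_ ?_)
  · rw [hx, ← mul_add_one]
    positivity
  · field_simp
    linear_combination R₁ / 2
  · field_simp
    linear_combination -R₂ / 2
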